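/- Fix a total lost time L ≥ 0 and set A = 1.5·L + 5. Fix a margin of safety 0 < α < 1, a true saturation flow rate s > 0 for one critical lane group, and a constant K ≥ 0 representing the sum of the true flow ratios of the remaining critical lane groups. Define C(v) = A/(1 − (v/s + K)/(1-α)) and C^r(v) = A/(1 − (v/s + K)). Then for any volumes 0 ≤ v₁ < v₂ with (v₂/s + K)/(1-α) < 1, the over-estimation is strictly larger at the higher volume: C(v₂) − C^r(v₂) > C(v₁) − C^r(v₁). (The over-estimated cycle-length values grow with the increase of the incoming critical traffic flow.) -/

import Mathlib

/-!
Both cycle lengths increase with the traffic volume, so the monotonicity of their difference cannot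
be read off term by term. Over a common denominator, however, the difference becomes
`A * α * x / ((1 - α - x) * (1 - x))` in the total true flow ratio `x`: the numerator increases
with `x`, while both factors of the denominator decrease and stay positive for `x < 1 - α`.
-/

section Overestimation

variable {𝕜 : Type*} [Field 𝕜] {A α x : 𝕜}

/-- The over-estimation `C - C^r` of Webster's optimal cycle length caused by a margin of safety
`α`, as a function of the total true flow ratio `x` of the critical lane groups. The numerator
`1.5 * L + 5` of Webster's formula is abstracted to `A`. -/
def cycleLengthOverestimation (A α x : 𝕜) : 𝕜 :=
  A / (1 - x / (1 - α)) - A / (1 - x)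

theorem cycleLengthOverestimation_eq_div (hα : 1 - α ≠ 0) (hxα : 1 - α - x ≠ 0)
    (hx : 1 - x ≠ 0) :
    cycleLengthOverestimation A α x = A * α * x / ((1 - α - x) * (1 - x)) := by
  rw [cycleLengthOverestimation, one_sub_div hα]
  field_simp
  ring

theorem cycleLengthOverestimation_strictMonoOn [LinearOrder 𝕜] [IsStrictOrderedRing 𝕜]
    (hA : 0 < A) (hα : 0 < α) :
    StrictMonoOn (cycleLengthOverestimation A α) (Set.Ico 0 (1 - α)) := by
  have eq_div : ∀ z ∈ Set.Ico 0 (1 - α),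
      cycleLengthOverestimation A α z = A * α * z / ((1 - α - z) * (1 - z)) := fun z hz ↦
    cycleLengthOverestimation_eq_div (hz.1.trans_lt hz.2).ne' (sub_pos.2 hz.2).ne'
      (by linarith [hz.2] : 0 < 1 - z).ne'
  intro x hx y hy hxy
  have hyα : 0 < 1 - α - y := sub_pos.2 hy.2
  have hy1 : 0 < 1 - y := by linarith
  have numerator_lt : A * α * x < A * α * y := by gcongr
  have denominator_le : (1 - α - y) * (1 - y) ≤ (1 - α - x) * (1 - x) := by
    gcongr
    linarith
  have numerator_nonneg : 0 ≤ A * α * y := mul_nonneg (mul_pos hA hα).le hy.1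
  rw [eq_div x hx, eq_div y hy]
  exact div_lt_div₀ numerator_lt denominator_le numerator_nonneg (mul_pos hyα hy1)

end Overestimation

/-- The cycle-length over-estimation `C(v) − C^r(v)` grows with the incoming
critical traffic volume `v`. -/
theorem cycle_length_overestimation_strictMono
    (L : ℝ) (hL : 0 ≤ L) (α s K : ℝ)
    (hα0 : 0 < α) (hα1 : α < 1) (hs : 0 < s) (hK : 0 ≤ K)
    (v₁ v₂ : ℝ) (hv₁ : 0 ≤ v₁) (h12 : v₁ < v₂)
    (hlt : (v₂ / s + K) / (1 - α) < 1) :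
    (1.5 * L + 5) / (1 - (v₂ / s + K) / (1 - α))
        - (1.5 * L + 5) / (1 - (v₂ / s + K))
      > (1.5 * L + 5) / (1 - (v₁ / s + K) / (1 - α))
        - (1.5 * L + 5) / (1 - (v₁ / s + K)) := by
  have hA : 0 < 1.5 * L + 5 := by positivity
  have ratio_nonneg : 0 ≤ v₁ / s + K := by positivity
  have ratio_lt : v₁ / s + K < v₂ / s + K := by gcongr
  have ratio_lt_margin : v₂ / s + K < 1 - α := (div_lt_one (sub_pos.2 hα1)).1 hlt
  exact cycleLengthOverestimation_strictMonoOn hA hα0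
    ⟨ratio_nonneg, ratio_lt.trans ratio_lt_margin⟩
    ⟨ratio_nonneg.trans ratio_lt.le, ratio_lt_margin⟩ ratio_lt
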